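/- arXiv:2010.07784 — 2 statements merged into one kernel-verified Lean document; each statement's English description precedes it below -/
import Mathlib

section
/- Let b > 0, d ∈ (0, 2b/(1+b)], ε ∈ (0, 1/(1+b)), and let 𝒬 be the set of Borel probability measures P on ℝ with P([−1, b]) = 1, ∫ z dP(z) = 0, and ∫ |z| dP(z) = d. Then for every real number c, the condition that P({z : c + z ≤ 0}) ≥ 1 − ε for all P ∈ 𝒬 holds if and only if c + min{b, d/(2ε)} ≤ 0. -/
/-!
Write `t = -c`; the chance constraint says `P (Z > t) ≤ ε` for every `P` in the ambiguity set.
Mean zero together with `E|Z| = d` forces `E[max Z 0] = d / 2`, so Markov's inequality gives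
`P (Z > t) ≤ d / (2 t) ≤ ε` as soon as `t ≥ d / (2 ε)`, while `P (Z > t) = 0` for `t ≥ b`
by the support condition (`one_sub_le_of_half_le_mul` and `one_sub_le_of_support_le`).

Conversely, if `t < min b (d / (2 ε))`, there is a violating three-point law with mass `p > ε` at
`d / (2 p)`, mass `d / 2` at `-1` and the remaining mass at `0`. It lies in the ambiguity set when
`d / 2 ≤ p b` and `p + d / 2 ≤ 1` (`threePoint_mem`), and it violates the constraint when
`p t < d / 2`. A suitable `p` is found in `exists_mass`.
-/

open MeasureTheory Set

/-- The mean-MAD ambiguity set `𝒬` of Borel probability measures on `ℝ` with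
support contained in `[−1, b]`, mean `0`, and mean absolute deviation `d`. -/
def asymMeanMADSet (b d : ℝ) : Set (Measure ℝ) :=
  {P | IsProbabilityMeasure P ∧ P (Icc (-1) b) = 1 ∧
    (∫ z, z ∂P) = 0 ∧ (∫ z, |z| ∂P) = d}

lemma integrable_of_mem {b d : ℝ} (hd : 0 < d) {P : Measure ℝ}
    (hP : P ∈ asymMeanMADSet b d) : Integrable (fun z : ℝ => z) P := by
  have habs : Integrable (fun z : ℝ => |z|) P := by
    -- otherwise the Bochner integral of `|z|` would be zero, against `d > 0`
    by_contra h
    have := hP.2.2.2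
    rw [integral_undef h] at this
    exact hd.ne this
  exact (integrable_norm_iff measurable_id.aestronglyMeasurable).1 habs

/-- Markov's inequality for the positive part, whose expectation is `d / 2`. -/
lemma one_sub_le_of_half_le_mul {b d ε t : ℝ} (hd : 0 < d) (ht : 0 < t)
    (h : d / 2 ≤ ε * t) {P : Measure ℝ} (hP : P ∈ asymMeanMADSet b d) :
    1 - ε ≤ P.real {z | z ≤ t} := by
  have hint := integrable_of_mem hd hP
  obtain ⟨_, -, hmean, hmad⟩ := hP
  have hpos : ∫ z, (z + |z|) / 2 ∂P = d / 2 := by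
    rw [integral_div, integral_add hint hint.abs, hmean, hmad, zero_add]
  have hmarkov := mul_meas_ge_le_integral_of_nonneg (μ := P) (f := fun z : ℝ => (z + |z|) / 2)
    (Filter.Eventually.of_forall fun z => by
      change 0 ≤ (z + |z|) / 2
      linarith [neg_abs_le z]) ((hint.add hint.abs).div_const 2) t
  rw [hpos] at hmarkov
  have hsub : P.real {z | z ≤ t}ᶜ ≤ P.real {z : ℝ | t ≤ (z + |z|) / 2} := by
    refine measureReal_mono fun z hz => ?_
    have hz : t < z := not_le.1 hz
    simp only [mem_ofPred_eq]
    linarith [le_abs_self z]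
  have hmeas : MeasurableSet {z : ℝ | z ≤ t} := measurableSet_Iic
  rw [probReal_compl_eq_one_sub hmeas] at hsub
  have : P.real {z : ℝ | t ≤ (z + |z|) / 2} ≤ ε := by
    refine le_of_mul_le_mul_left ?_ ht
    linarith
  linarith

lemma one_sub_le_of_support_le {b d ε t : ℝ} (hε : 0 ≤ ε) (h : b ≤ t) {P : Measure ℝ}
    (hP : P ∈ asymMeanMADSet b d) : 1 - ε ≤ P.real {z | z ≤ t} := by
  obtain ⟨_, hsupp, -, -⟩ := hP
  have hle : P.real (Icc (-1) b) ≤ P.real {z | z ≤ t} :=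
    measureReal_mono fun z hz => hz.2.trans h
  have : P.real (Icc (-1) b) = 1 := by simp [measureReal_def, hsupp]
  linarith

/-- The law with mass `p` at `d / (2 p)`, mass `d / 2` at `-1` and mass `1 - p - d / 2` at `0`.
Negative masses are truncated to zero, so this is a probability measure only for
`0 ≤ p`, `0 ≤ d` and `p + d / 2 ≤ 1`. -/
noncomputable def threePoint (d p : ℝ) : Measure ℝ :=
  ENNReal.ofReal p • Measure.dirac (d / (2 * p)) + ENNReal.ofReal (d / 2) • Measure.dirac (-1)
    + ENNReal.ofReal (1 - p - d / 2) • Measure.dirac 0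

lemma integral_threePoint {d p : ℝ} (hd : 0 < d) (hp : 0 < p) (h1 : p + d / 2 ≤ 1) (f : ℝ → ℝ) :
    ∫ z, f z ∂threePoint d p =
      p * f (d / (2 * p)) + d / 2 * f (-1) + (1 - p - d / 2) * f 0 := by
  have hi (a x : ℝ) : Integrable f (ENNReal.ofReal a • Measure.dirac x) :=
    (integrable_dirac (by simp)).smul_measure ENNReal.ofReal_ne_top
  unfold threePoint
  rw [integral_add_measure ((hi _ _).add_measure (hi _ _)) (hi _ _),
    integral_add_measure (hi _ _) (hi _ _)]
  simp only [integral_smul_measure, integral_dirac, smul_eq_mul]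
  rw [ENNReal.toReal_ofReal hp.le, ENNReal.toReal_ofReal (by linarith),
    ENNReal.toReal_ofReal (by linarith)]

lemma ofReal_masses_sum {d p : ℝ} (hd : 0 < d) (hp : 0 < p) (h1 : p + d / 2 ≤ 1) :
    ENNReal.ofReal p + ENNReal.ofReal (d / 2) + ENNReal.ofReal (1 - p - d / 2) = 1 := by
  rw [← ENNReal.ofReal_add hp.le (by linarith),
    ← ENNReal.ofReal_add (by linarith) (by linarith), ← ENNReal.ofReal_one]
  congr 1
  ring

lemma threePoint_mem {b d p : ℝ} (hb : 0 < b) (hd : 0 < d) (hp : 0 < p)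
    (h1 : p + d / 2 ≤ 1) (hpb : d / 2 ≤ p * b) : threePoint d p ∈ asymMeanMADSet b d := by
  have hx0 : 0 < d / (2 * p) := by positivity
  have hxb : d / (2 * p) ≤ b := by
    rw [div_le_iff₀ (by positivity)]
    linarith
  have hpx : p * (d / (2 * p)) = d / 2 := by field_simp
  refine ⟨⟨?_⟩, ?_, ?_, ?_⟩
  · simpa [threePoint] using ofReal_masses_sum hd hp h1
  · have m1 : d / (2 * p) ∈ Icc (-1) b := ⟨by linarith, hxb⟩
    have m2 : (-1 : ℝ) ∈ Icc (-1) b := ⟨le_rfl, by linarith⟩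
    have m3 : (0 : ℝ) ∈ Icc (-1) b := ⟨by norm_num, hb.le⟩
    simp only [threePoint, Measure.add_apply, Measure.smul_apply, smul_eq_mul,
      Measure.dirac_apply, indicator_of_mem m1, indicator_of_mem m2, indicator_of_mem m3,
      Pi.one_apply, mul_one]
    exact ofReal_masses_sum hd hp h1
  · rw [integral_threePoint hd hp h1 fun z => z, hpx]
    ring
  · rw [integral_threePoint hd hp h1 fun z => |z|, abs_of_pos hx0, hpx]
    norm_num

/-- Below the positive atom, `threePoint` carries mass at most `1 - p`. -/
lemma threePoint_real_le {d p t : ℝ} (hd : 0 < d) (hp : 0 < p) (h1 : p + d / 2 ≤ 1)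
    (ht : p * t < d / 2) : (threePoint d p).real {z | z ≤ t} ≤ 1 - p := by
  have hx : t < d / (2 * p) := by
    rw [lt_div_iff₀ (by positivity)]
    linarith
  have hmeas : MeasurableSet {z : ℝ | z ≤ t} := measurableSet_Iic
  rw [← integral_indicator_one hmeas, integral_threePoint hd hp h1]
  have hz : Set.indicator {z | z ≤ t} (1 : ℝ → ℝ) (d / (2 * p)) = 0 :=
    indicator_of_notMem (s := {z | z ≤ t}) (fun h => not_le.2 hx h) _
  have hle (y : ℝ) : Set.indicator {z | z ≤ t} (1 : ℝ → ℝ) y ≤ 1 :=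
    indicator_le_self' (fun _ _ => zero_le_one) y
  rw [hz]
  have := mul_le_mul_of_nonneg_left (hle (-1)) (by linarith : 0 ≤ d / 2)
  have := mul_le_mul_of_nonneg_left (hle 0) (by linarith : 0 ≤ 1 - p - d / 2)
  linarith

/-- Admissible mass of the positive atom in a violating three-point law. -/
lemma exists_mass {b d ε t : ℝ} (hb : 0 < b) (hd : 0 < d) (hdb : d * (1 + b) ≤ 2 * b)
    (hε : 0 < ε) (hεb : ε * (1 + b) < 1) (htb : t < b) (htd : ε * t < d / 2) :
    ∃ p, ε < p ∧ p * t < d / 2 ∧ p + d / 2 ≤ 1 ∧ d / 2 ≤ p * b := by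
  rcases lt_or_ge (ε * b) (d / 2) with h | h
  · -- the positive atom can sit at the right endpoint `b`
    have hpb : d / (2 * b) * b = d / 2 := by field_simp
    refine ⟨d / (2 * b), ?_, ?_, ?_, hpb.ge⟩
    · rw [lt_div_iff₀ (by positivity)]
      linarith
    · rw [← hpb]
      exact mul_lt_mul_of_pos_left htb (by positivity)
    · have : d / (2 * b) + d / 2 = d * (1 + b) / (2 * b) := by field_simp
      rw [this]
      exact div_le_one_of_le₀ hdb (by positivity)
  · -- `p = ε` leaves slack in both strict constraints, so a slightly larger `p` works
    have hε1 : ε < 1 - d / 2 := by linarith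
    obtain ⟨p, hp, hp1, hpt⟩ : ∃ p, ε < p ∧ p ≤ 1 - d / 2 ∧ p * t < d / 2 := by
      rcases le_or_gt t 0 with ht | ht
      · exact ⟨1 - d / 2, hε1, le_rfl, by nlinarith⟩
      · obtain ⟨p, hp, hp'⟩ := exists_between
          (lt_min hε1 ((lt_div_iff₀ ht).2 htd))
        exact ⟨p, hp, (hp'.trans_le (min_le_left _ _)).le,
          (lt_div_iff₀ ht).1 (hp'.trans_le (min_le_right _ _))⟩
    exact ⟨p, hp, hpt, by linarith, by nlinarith⟩

/-- Theorem 12 (convex reformulation of an ambiguous chance constraint with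
right-hand side uncertainty, asymmetric support `[−1, b]`):
`inf_{P ∈ 𝒬} P(c + Z ≤ 0) ≥ 1 − ε` if and only if `c + min{b, d/(2ε)} ≤ 0`. -/
theorem ambiguous_chance_constraint_rhs_asym (b d ε : ℝ)
    (hb : 0 < b) (hd : d ∈ Ioc (0 : ℝ) (2 * b / (1 + b)))
    (hε : ε ∈ Ioo (0 : ℝ) (1 / (1 + b))) (c : ℝ) :
    (∀ P ∈ asymMeanMADSet b d, 1 - ε ≤ (P {z | c + z ≤ 0}).toReal) ↔
      c + min b (d / (2 * ε)) ≤ 0 := by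
  obtain ⟨hd0, hdb⟩ := hd
  obtain ⟨hε0, hεb⟩ := hε
  rw [le_div_iff₀ (by linarith)] at hdb
  rw [lt_div_iff₀ (by linarith)] at hεb
  have hset : {z : ℝ | c + z ≤ 0} = {z | z ≤ -c} := by
    ext z
    simp only [mem_ofPred_eq]
    constructor <;> intro h <;> linarith
  rw [hset]
  constructor
  · intro h
    by_contra! hc
    have hlt : -c < min b (d / (2 * ε)) := by linarith
    obtain ⟨htb, htd⟩ := lt_min_iff.1 hlt
    rw [lt_div_iff₀ (by positivity)] at htd
    obtain ⟨p, hp, hpt, hp1, hpb⟩ :=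
      exists_mass hb hd0 hdb hε0 hεb htb (by linarith)
    have hp0 := hε0.trans hp
    have hge : 1 - ε ≤ (threePoint d p).real {z | z ≤ -c} :=
      h _ (threePoint_mem hb hd0 hp0 hp1 hpb)
    have hle := threePoint_real_le hd0 hp0 hp1 hpt
    linarith
  · intro h P hP
    have hmin : min b (d / (2 * ε)) ≤ -c := by linarith
    rcases min_le_iff.1 hmin with hbc | hdc
    · exact one_sub_le_of_support_le hε0.le hbc hP
    · have hc0 : 0 < -c := lt_of_lt_of_le (by positivity) hdc
      rw [div_le_iff₀ (by positivity)] at hdc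
      exact one_sub_le_of_half_le_mul hd0 hc0 (by linarith) hP
end

section
/- Let d ∈ (0, 1], ε ∈ (0, 1/2), and let 𝒬 be the set of Borel probability measures P on ℝ with P([−1,1]) = 1, ∫ z dP(z) = 0, and ∫ |z| dP(z) = d. Let c₁, …, c_m be real numbers. Then the condition that P({z : cᵢ + z ≤ 0 for all i = 1, …, m}) ≥ 1 − ε for all P ∈ 𝒬 holds if and only if max_{i} cᵢ + min{1, d/(2ε)} ≤ 0. -/
/-!
Writing `M` for the largest `c i` and `t = -M`, the constraint says `P (Iic t) ≥ 1 - ε` on the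
whole ambiguity set.

Since the mean is `0` and the mean absolute deviation is `d`, the positive part `(z + |z|) / 2` has
integral `d / 2`, so Markov's inequality gives `P (Ioi t) ≤ d / (2 t)` for `t > 0`; this is at most
`ε` once `t ≥ d / (2 ε)`, and for `t ≥ 1` the tail is null by the support condition.

Conversely, if `t < min 1 (d / (2 ε))`, some `s ∈ [d / (2 - d), 1]` satisfies
`t < s < d / (2 ε)`. The law with mass `p = d / (2 s)` at `s` and mass `1 - p` at
`-d / (2 (1 - p))` belongs to the ambiguity set (`s ≥ d / (2 - d)` is exactly what keeps the lower
atom in `[-1, 0]`) and puts mass `p > ε` above `t`.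
-/

open MeasureTheory Set

/-- The mean-MAD ambiguity set `𝒬` of Borel probability measures on `ℝ` with
support contained in `[−1, 1]`, mean `0`, and mean absolute deviation `d`. -/
def symMeanMADSet (d : ℝ) : Set (Measure ℝ) :=
  {P | IsProbabilityMeasure P ∧ P (Icc (-1) 1) = 1 ∧
    (∫ z, z ∂P) = 0 ∧ (∫ z, |z| ∂P) = d}

/-- The tail bound `P (Ioi t) ≤ d / (2 t)`, in product form. -/
lemma symMeanMAD_tail {d t : ℝ} (hd : 0 < d) (ht : 0 ≤ t) {P : Measure ℝ}
    (hP : P ∈ symMeanMADSet d) : t * P.real (Ioi t) ≤ d / 2 := by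
  obtain ⟨hprob, -, hmean, hmad⟩ := hP
  -- Integrability is forced: otherwise the integral of `|z|` would take the junk value `0 ≠ d`.
  have habs : Integrable (fun z : ℝ => |z|) P := by
    by_contra h
    rw [integral_undef h] at hmad
    exact hd.ne hmad
  have hid : Integrable (fun z : ℝ => z) P :=
    (integrable_norm_iff measurable_id.aestronglyMeasurable).1 habs
  have hint : ∫ z, (z + |z|) / 2 ∂P = d / 2 := by
    rw [integral_div, integral_add hid habs, hmean, hmad, zero_add]
  have hmarkov := mul_meas_ge_le_integral_of_nonneg (μ := P) (f := fun z : ℝ => (z + |z|) / 2)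
    (Filter.Eventually.of_forall fun z => by
      have := neg_abs_le z
      simp only [Pi.zero_apply]
      linarith) ((hid.add habs).div_const 2) t
  rw [hint] at hmarkov
  have hsub : Ioi t ⊆ {z : ℝ | t ≤ (z + |z|) / 2} := fun z hz => by
    have h1 : t < z := hz
    have h2 := le_abs_self z
    simp only [mem_ofPred_eq]
    linarith
  exact (mul_le_mul_of_nonneg_left (measureReal_mono hsub) ht).trans hmarkov

/-- The probability measure with mass `p` at `s` and mass `1 - p` at `-r`, for `p ∈ [0, 1]`. -/
noncomputable def twoPoint (p s r : ℝ) : Measure ℝ :=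
  ENNReal.ofReal p • Measure.dirac s + ENNReal.ofReal (1 - p) • Measure.dirac (-r)

lemma integral_twoPoint {p s r : ℝ} (hp0 : 0 ≤ p) (hp1 : p ≤ 1) (f : ℝ → ℝ) :
    ∫ z, f z ∂(twoPoint p s r) = p * f s + (1 - p) * f (-r) := by
  unfold twoPoint
  rw [integral_add_measure, integral_smul_measure, integral_smul_measure, integral_dirac,
    integral_dirac, ENNReal.toReal_ofReal hp0, ENNReal.toReal_ofReal (by linarith)]
  · simp
  · exact (integrable_dirac (by simp)).smul_measure ENNReal.ofReal_ne_top
  · exact (integrable_dirac (by simp)).smul_measure ENNReal.ofReal_ne_top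

lemma twoPoint_mem {d p s r : ℝ} (hp0 : 0 ≤ p) (hp1 : p ≤ 1) (hs0 : 0 ≤ s) (hs1 : s ≤ 1)
    (hr0 : 0 ≤ r) (hr1 : r ≤ 1) (hps : p * s = d / 2) (hpr : (1 - p) * r = d / 2) :
    twoPoint p s r ∈ symMeanMADSet d := by
  have hsum : ENNReal.ofReal p + ENNReal.ofReal (1 - p) = 1 := by
    rw [← ENNReal.ofReal_add hp0 (by linarith)]
    simp
  refine ⟨⟨by simp [twoPoint, hsum]⟩, ?_, ?_, ?_⟩
  · have h1 : s ∈ Icc (-1 : ℝ) 1 := ⟨by linarith, hs1⟩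
    have h2 : -r ∈ Icc (-1 : ℝ) 1 := ⟨by linarith, by linarith⟩
    simp only [twoPoint, Measure.add_apply, Measure.smul_apply, smul_eq_mul,
      Measure.dirac_apply' _ measurableSet_Icc, indicator_of_mem h1, indicator_of_mem h2]
    simpa using hsum
  · rw [integral_twoPoint hp0 hp1]
    linarith
  · rw [integral_twoPoint hp0 hp1, abs_neg, abs_of_nonneg hs0, abs_of_nonneg hr0]
    linarith

lemma twoPoint_Iic {p s r t : ℝ} (hp1 : p ≤ 1) (hts : t < s) :
    (twoPoint p s r (Iic t)).toReal ≤ 1 - p := by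
  refine ENNReal.toReal_le_of_le_ofReal (by linarith) ?_
  have h1 : s ∉ Iic t := by simpa using hts
  simp only [twoPoint, Measure.add_apply, Measure.smul_apply, smul_eq_mul,
    Measure.dirac_apply' _ measurableSet_Iic, indicator_of_notMem h1, mul_zero, zero_add]
  exact mul_le_of_le_one_right' (indicator_le_self' (by simp) _)

/-- Theorem 14 (joint ambiguous chance constraint with a single shared
uncertain parameter): `inf_{P ∈ 𝒬} P(cᵢ + Z ≤ 0 for all i) ≥ 1 − ε` if and
only if `maxᵢ cᵢ + min{1, d/(2ε)} ≤ 0`. -/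
theorem joint_chance_constraint_shared (d ε : ℝ)
    (hd : d ∈ Ioc (0 : ℝ) 1) (hε : ε ∈ Ioo (0 : ℝ) (1 / 2))
    (m : ℕ) (hm : 0 < m) (c : Fin m → ℝ) :
    (∀ P ∈ symMeanMADSet d,
        1 - ε ≤ (P {z | ∀ i, c i + z ≤ 0}).toReal) ↔
      Finset.univ.sup'
          (Finset.univ_nonempty_iff.mpr (Fin.pos_iff_nonempty.mp hm)) c
        + min 1 (d / (2 * ε)) ≤ 0 := by
  obtain ⟨hd0, hd1⟩ := hd
  obtain ⟨hε0, hε1⟩ := hε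
  set M := Finset.univ.sup'
    (Finset.univ_nonempty_iff.mpr (Fin.pos_iff_nonempty.mp hm)) c with hM
  have hset : {z | ∀ i, c i + z ≤ 0} = Iic (-M) := by
    ext z
    have : M ≤ -z ↔ ∀ i, c i ≤ -z := by simp [hM]
    simp only [mem_ofPred_eq, mem_Iic, le_neg, this, ← le_neg_iff_add_nonpos_right]
  rw [hset]
  rw [← le_neg_iff_add_nonpos_left]
  generalize -M = t
  constructor
  · intro h
    by_contra! hlt
    obtain ⟨ht1, htd⟩ := lt_min_iff.1 hlt
    have hle1 : d / (2 - d) ≤ 1 := by rw [div_le_one (by linarith)]; linarith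
    have hltd : d / (2 - d) < d / (2 * ε) :=
      div_lt_div_of_pos_left hd0 (by linarith) (by linarith)
    have hpos : 0 < d / (2 - d) := div_pos hd0 (by linarith)
    obtain ⟨s, hls, hs1, hts, hsd⟩ : ∃ s, d / (2 - d) ≤ s ∧ s ≤ 1 ∧ t < s ∧ s < d / (2 * ε) := by
      rcases lt_or_ge 1 (d / (2 * ε)) with h1 | h1
      · exact ⟨1, hle1, le_rfl, ht1, h1⟩
      · obtain ⟨s, h2, h3⟩ := exists_between (max_lt htd hltd)
        exact ⟨s, (max_lt_iff.1 h2).2.le, h3.le.trans h1, (max_lt_iff.1 h2).1, h3⟩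
    have hs0 : 0 < s := hpos.trans_le hls
    have hp0 : 0 < d / (2 * s) := by positivity
    have hεp : ε < d / (2 * s) := by
      rw [lt_div_iff₀ (by positivity)] at hsd ⊢
      linarith
    -- `1 - p ≥ d / 2`, so that the lower atom stays above `-1`.
    have hpd : d / (2 * s) ≤ 1 - d / 2 := by
      rw [div_le_iff₀ (by linarith)] at hls
      rw [div_le_iff₀ (by positivity)]
      linarith
    have hq : 0 < 1 - d / (2 * s) := by linarith
    have hmem : twoPoint (d / (2 * s)) s (d / 2 / (1 - d / (2 * s))) ∈ symMeanMADSet d :=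
      twoPoint_mem hp0.le (by linarith) hs0.le hs1 (by positivity)
        (by rw [div_le_one hq]; linarith) (by field_simp) (mul_div_cancel₀ _ hq.ne')
    have := (h _ hmem).trans (twoPoint_Iic (by linarith) hts)
    linarith
  · intro h P hP
    have hprob : IsProbabilityMeasure P := hP.1
    rcases min_le_iff.1 h with h1 | h1
    · have hone : P (Iic t) = 1 :=
        le_antisymm prob_le_one
          (hP.2.1.symm.le.trans (measure_mono fun z hz => hz.2.trans h1))
      rw [hone, ENNReal.toReal_one]
      linarith
    · have ht : 0 < t := (by positivity : 0 < d / (2 * ε)).trans_le h1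
      have htail := symMeanMAD_tail hd0 ht.le hP
      rw [div_le_iff₀ (by positivity)] at h1
      have htε : P.real (Ioi t) ≤ ε := le_of_mul_le_mul_left (by linarith) ht
      have hcompl := probReal_compl_eq_one_sub (μ := P) (measurableSet_Iic (a := t))
      rw [compl_Iic] at hcompl
      change 1 - ε ≤ P.real (Iic t)
      linarith
end
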